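/- Let w be a Kreweras word of length 3n. Then evac*(w) is obtained from evac(w) by replacing every letter B with C and every letter C with B. -/

import Mathlib

/-- The three letters of a Kreweras word. -/
inductive KLetter : Type
  | A | B | C
deriving DecidableEq, Repr

open KLetter

/-- `w` is a Kreweras word of length `3 * n`: it has `n` `A`'s, `n` `B`'s, `n` `C`'s,
and every prefix has at least as many `A`'s as `B`'s and at least as many `A`'s as `C`'s. -/
def IsKrewerasWord (n : ℕ) (w : List KLetter) : Prop :=
  w.length = 3 * n ∧ w.count A = n ∧ w.count B = n ∧ w.count C = n ∧
  ∀ k : ℕ, (w.take k).count B ≤ (w.take k).count A ∧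
           (w.take k).count C ≤ (w.take k).count A

/-- `kiota w` is the smallest index `ι ≥ 1` (1-indexed) such that the prefix of
length `ι` of `w` has equally many `A`'s as `B`'s, or equally many `A`'s as `C`'s
(and `0` if no such index exists). -/
def kiota (w : List KLetter) : ℕ :=
  (((List.range (w.length + 1)).filter fun k =>
      decide (1 ≤ k) &&
      (((w.take k).count A == (w.take k).count B) ||
       ((w.take k).count A == (w.take k).count C))).headD 0)

/-- Promotion of a Kreweras word:
`pro w = (w₂, …, w_{ι-1}, A, w_{ι+1}, …, w_{3n}, w_ι)` where `ι = kiota w`. -/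
def pro (w : List KLetter) : List KLetter :=
  ((w.drop 1).set (kiota w - 2) A) ++ [w.getD (kiota w - 1) A]

/-- The trip permutation `σ_w` of a Kreweras word of length `3 * n`, as a function on
1-indexed positions: `σ_w i` is the unique element of `{1, …, 3n}` congruent to
`kiota (pro^[i-1] w) + i - 1` modulo `3 * n`. -/
def ksigma (n : ℕ) (w : List KLetter) (i : ℕ) : ℕ :=
  (kiota (pro^[i - 1] w) + i - 2) % (3 * n) + 1

/-- `keps w i` is the letter of `pro^[i-1] w` in (1-indexed) position `kiota (pro^[i-1] w)`. -/
def keps (w : List KLetter) (i : ℕ) : KLetter :=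
  (pro^[i - 1] w).getD (kiota (pro^[i - 1] w) - 1) A

/-- The negation swapping `B` and `C` (and fixing `A`). -/
def negL : KLetter → KLetter
  | A => A
  | B => C
  | C => B

open Classical in
/-- The involution `τ_i` on Kreweras words of length `3 * n`: swap the letters in
(1-indexed) positions `i` and `i + 1` if the result is again a Kreweras word,
and otherwise do nothing. -/
noncomputable def tau (n i : ℕ) (w : List KLetter) : List KLetter :=
  let w' := (w.set (i - 1) (w.getD i A)).set i (w.getD (i - 1) A)
  if IsKrewerasWord n w' then w' else w

/-- `tauDown n j = τ_j ∘ τ_{j-1} ∘ ⋯ ∘ τ_1`. -/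
noncomputable def tauDown (n : ℕ) : ℕ → List KLetter → List KLetter
  | 0, w => w
  | j + 1, w => tau n (j + 1) (tauDown n j w)

/-- `evacAux n j = (tauDown n 1) ∘ (tauDown n 2) ∘ ⋯ ∘ (tauDown n j)`. -/
noncomputable def evacAux (n : ℕ) : ℕ → List KLetter → List KLetter
  | 0, w => w
  | j + 1, w => evacAux n j (tauDown n (j + 1) w)

/-- Evacuation on Kreweras words of length `3 * n`:
`evac = (τ_1) ∘ (τ_2 ∘ τ_1) ∘ ⋯ ∘ (τ_{3n-1} ∘ ⋯ ∘ τ_2 ∘ τ_1)`. -/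
noncomputable def evac (n : ℕ) (w : List KLetter) : List KLetter :=
  evacAux n (3 * n - 1) w

/-- `tauAsc n k c = τ_{k+c-1} ∘ ⋯ ∘ τ_{k+1} ∘ τ_k`. -/
noncomputable def tauAsc (n k : ℕ) : ℕ → List KLetter → List KLetter
  | 0, w => w
  | j + 1, w => tau n (k + j) (tauAsc n k j w)

/-- `evacStarAux n j = (tauAsc n 1 (3n-1)) ∘ (tauAsc n 2 (3n-2)) ∘ ⋯ ∘ (tauAsc n j (3n-j))`. -/
noncomputable def evacStarAux (n : ℕ) : ℕ → List KLetter → List KLetter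
  | 0, w => w
  | j + 1, w => evacStarAux n j (tauAsc n (j + 1) (3 * n - (j + 1)) w)

/-- Dual evacuation on Kreweras words of length `3 * n`:
`evac* = (τ_{3n-1} ∘ ⋯ ∘ τ_1) ∘ (τ_{3n-1} ∘ ⋯ ∘ τ_2) ∘ ⋯ ∘ (τ_{3n-1})`. -/
noncomputable def evacStar (n : ℕ) (w : List KLetter) : List KLetter :=
  evacStarAux n (3 * n - 1) w

/-- The three-element "V"-shaped poset: `a < b`, `a < c`, with `b`, `c` incomparable. -/
inductive VP : Type
  | a | b | c
deriving DecidableEq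

instance : PartialOrder VP where
  le x y := x = y ∨ x = VP.a
  le_refl x := Or.inl rfl
  le_trans x y z hxy hyz := by
    rcases hxy with rfl | rfl
    · exact hyz
    · exact Or.inr rfl
  le_antisymm x y hxy hyx := by
    rcases hxy with rfl | rfl
    · rfl
    · rcases hyx with rfl | rfl <;> rfl

/-- The labeling of elements of `V(n) = VP × Fin n` by letters. -/
def vlabel {n : ℕ} (p : VP × Fin n) : KLetter :=
  match p.1 with
  | VP.a => A
  | VP.b => B
  | VP.c => C

/-- `L` is a linear extension of `V(n) = VP × Fin n` (with the product order):
a list of all elements of `V(n)`, each appearing once, such that `L_i ≤ L_j`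
implies `i ≤ j`. -/
def IsLinearExtension (n : ℕ) (L : List (VP × Fin n)) : Prop :=
  L.Nodup ∧ (∀ p : VP × Fin n, p ∈ L) ∧
  ∀ i j : Fin L.length, L.get i ≤ L.get j → (i : ℕ) ≤ (j : ℕ)

/-- A connected Kreweras word: a Kreweras word of length `3 * n` having no proper
nonempty consecutive substring which is itself a Kreweras word. -/
def ConnectedKrewerasWord (n : ℕ) (w : List KLetter) : Prop :=
  IsKrewerasWord n w ∧
  ∀ (u : List KLetter) (m : ℕ), u <:+: w → u ≠ [] → u ≠ w → ¬ IsKrewerasWord m u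

namespace KP

/-! ### Heights and the scanning form of promotion -/

def sx : KLetter → ℤ
  | A => 1
  | B => -1
  | C => 0

def sy : KLetter → ℤ
  | A => 1
  | B => 0
  | C => -1

def dx : List KLetter → ℤ
  | [] => 0
  | a :: l => sx a + dx l

def dy : List KLetter → ℤ
  | [] => 0
  | a :: l => sy a + dy l

@[simp] lemma sx_A : sx A = 1 := rfl
@[simp] lemma sx_B : sx B = -1 := rfl
@[simp] lemma sx_C : sx C = 0 := rfl
@[simp] lemma sy_A : sy A = 1 := rfl
@[simp] lemma sy_B : sy B = 0 := rfl
@[simp] lemma sy_C : sy C = -1 := rfl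
@[simp] lemma dx_nil : dx [] = 0 := rfl
@[simp] lemma dy_nil : dy [] = 0 := rfl
@[simp] lemma dx_cons (a : KLetter) (l : List KLetter) : dx (a :: l) = sx a + dx l := rfl
@[simp] lemma dy_cons (a : KLetter) (l : List KLetter) : dy (a :: l) = sy a + dy l := rfl

@[simp] lemma dx_append (l m : List KLetter) : dx (l ++ m) = dx l + dx m := by
  induction l with
  | nil => simp
  | cons a l ih => simp [ih, add_assoc]

@[simp] lemma dy_append (l m : List KLetter) : dy (l ++ m) = dy l + dy m := by
  induction l with
  | nil => simp
  | cons a l ih => simp [ih, add_assoc]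

@[simp] lemma dx_replicate (k : ℕ) (a : KLetter) : dx (List.replicate k a) = k * sx a := by
  induction k with
  | zero => simp
  | succ k ih => simp [List.replicate_succ, ih]; ring

@[simp] lemma dy_replicate (k : ℕ) (a : KLetter) : dy (List.replicate k a) = k * sy a := by
  induction k with
  | zero => simp
  | succ k ih => simp [List.replicate_succ, ih]; ring

/-- Every prefix, started at height `(x, y)`, stays in the quadrant. -/
def Adm : ℤ → ℤ → List KLetter → Prop
  | x, y, [] => 0 ≤ x ∧ 0 ≤ y
  | x, y, a :: l => 0 ≤ x ∧ 0 ≤ y ∧ Adm (x + sx a) (y + sy a) l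

/-- Some prefix reaches second height `0`. -/
def Att : ℤ → List KLetter → Prop
  | y, [] => y = 0
  | y, a :: l => y = 0 ∨ Att (y + sy a) l

/-- Promotion scan: turn into `A` the first letter at which a height becomes `0`. -/
def scan : ℤ → ℤ → List KLetter → List KLetter × Option KLetter
  | _, _, [] => ([], none)
  | x, y, A :: l => (A :: (scan (x + 1) (y + 1) l).1, (scan (x + 1) (y + 1) l).2)
  | x, y, B :: l => if x = 1 then (A :: l, some B) else
      (B :: (scan (x - 1) y l).1, (scan (x - 1) y l).2)
  | x, y, C :: l => if y = 1 then (A :: l, some C) else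
      (C :: (scan x (y - 1) l).1, (scan x (y - 1) l).2)

lemma scan_none_fst : ∀ (l : List KLetter) (x y : ℤ), (scan x y l).2 = none → (scan x y l).1 = l
  | [], _, _ => by simp [scan]
  | A :: l, x, y => by
      have := scan_none_fst l (x + 1) (y + 1)
      simpa [scan] using this
  | B :: l, x, y => by
      have := scan_none_fst l (x - 1) y
      by_cases h : x = 1 <;> simp [scan, h] at this ⊢
      exact this
  | C :: l, x, y => by
      have := scan_none_fst l x (y - 1)
      by_cases h : y = 1 <;> simp [scan, h] at this ⊢
      exact this

lemma scan_append_some : ∀ (l : List KLetter) (x y : ℤ) (m l' : List KLetter) (c : KLetter),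
    scan x y l = (l', some c) → scan x y (l ++ m) = (l' ++ m, some c)
  | [], _, _ => by simp [scan]
  | A :: l, x, y => by
      intro m l' c h
      simp only [scan, Prod.mk.injEq] at h
      have := scan_append_some l (x + 1) (y + 1) m _ c (Prod.ext rfl h.2)
      simp [scan, this, ← h.1]
  | B :: l, x, y => by
      intro m l' c h
      by_cases hx : x = 1
      · simp [scan, hx] at h ⊢
        simp [← h.1, h.2]
      · simp only [scan, hx, if_false, Prod.mk.injEq] at h
        have := scan_append_some l (x - 1) y m _ c (Prod.ext rfl h.2)
        simp [scan, hx, this, ← h.1]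
  | C :: l, x, y => by
      intro m l' c h
      by_cases hx : y = 1
      · simp [scan, hx] at h ⊢
        simp [← h.1, h.2]
      · simp only [scan, hx, if_false, Prod.mk.injEq] at h
        have := scan_append_some l x (y - 1) m _ c (Prod.ext rfl h.2)
        simp [scan, hx, this, ← h.1]

lemma scan_append_none : ∀ (l : List KLetter) (x y : ℤ) (m : List KLetter),
    (scan x y l).2 = none → scan x y (l ++ m) =
      (l ++ (scan (x + dx l) (y + dy l) m).1, (scan (x + dx l) (y + dy l) m).2)
  | [], _, _ => by simp
  | A :: l, x, y => by
      intro m h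
      simp only [scan] at h
      have := scan_append_none l (x + 1) (y + 1) m h
      simp [scan, this, add_assoc]
  | B :: l, x, y => by
      intro m h
      by_cases hx : x = 1
      · simp [scan, hx] at h
      · simp only [scan, hx, if_false] at h
        have := scan_append_none l (x - 1) y m h
        have e : x - 1 + dx l = x + (-1 + dx l) := by ring
        rw [e] at this
        simp [scan, hx, this]
  | C :: l, x, y => by
      intro m h
      by_cases hx : y = 1
      · simp [scan, hx] at h
      · simp only [scan, hx, if_false] at h
        have := scan_append_none l x (y - 1) m h
        have e : y - 1 + dy l = y + (-1 + dy l) := by ring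
        rw [e] at this
        simp [scan, hx, this]

lemma scan_none_pos : ∀ (l : List KLetter) (x y : ℤ), 1 ≤ x → 1 ≤ y → (scan x y l).2 = none →
    1 ≤ x + dx l ∧ 1 ≤ y + dy l ∧ Adm (x - 1) (y - 1) l
  | [], _, _ => by intro h1 h2 _; simp [Adm]; omega
  | A :: l, x, y => by
      intro h1 h2 h
      simp only [scan] at h
      have := scan_none_pos l (x + 1) (y + 1) (by omega) (by omega) h
      simp [Adm]
      refine ⟨by omega, by omega, by omega, by omega, ?_⟩
      simpa using this.2.2
  | B :: l, x, y => by
      intro h1 h2 h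
      by_cases hx : x = 1
      · simp [scan, hx] at h
      · simp only [scan, hx, if_false] at h
        have := scan_none_pos l (x - 1) y (by omega) (by omega) h
        simp [Adm]
        refine ⟨by omega, by omega, by omega, by omega, ?_⟩
        simpa [sub_eq_add_neg] using this.2.2
  | C :: l, x, y => by
      intro h1 h2 h
      by_cases hx : y = 1
      · simp [scan, hx] at h
      · simp only [scan, hx, if_false] at h
        have := scan_none_pos l x (y - 1) (by omega) (by omega) h
        simp [Adm]
        refine ⟨by omega, by omega, by omega, by omega, ?_⟩
        simpa [sub_eq_add_neg] using this.2.2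

lemma adm_mono : ∀ (l : List KLetter) (x y x' y' : ℤ), x ≤ x' → y ≤ y' → Adm x y l → Adm x' y' l
  | [], _, _, _, _ => by intro h1 h2 h; simp [Adm] at h ⊢; omega
  | a :: l, x, y, x', y' => by
      intro h1 h2 h
      simp only [Adm] at h ⊢
      exact ⟨by omega, by omega, adm_mono l _ _ _ _ (by omega) (by omega) h.2.2⟩

lemma adm_zero {l : List KLetter} {x y : ℤ} (h : Adm x y l) : 0 ≤ x ∧ 0 ≤ y := by
  cases l with
  | nil => exact h
  | cons a l => exact ⟨h.1, h.2.1⟩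

lemma adm_append : ∀ (l m : List KLetter) (x y : ℤ),
    Adm x y (l ++ m) ↔ Adm x y l ∧ Adm (x + dx l) (y + dy l) m
  | [], m, x, y => by
      simp only [List.nil_append, Adm, dx_nil, dy_nil, add_zero]
      exact ⟨fun h => ⟨adm_zero h, h⟩, fun h => h.2⟩
  | a :: l, m, x, y => by
      simp only [List.cons_append, Adm, dx_cons, dy_cons, adm_append l m, add_assoc]
      tauto

lemma adm_end {l : List KLetter} {x y : ℤ} (h : Adm x y l) : 0 ≤ x + dx l ∧ 0 ≤ y + dy l := by
  have := (adm_append l [] x y).1 (by simpa using h)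
  exact adm_zero this.2

lemma att_end : ∀ (l : List KLetter) (y : ℤ), y + dy l = 0 → Att y l
  | [], y => by simp [Att]
  | a :: l, y => by
      intro h
      exact Or.inr (att_end l _ (by simp at h; omega))

/-- no hit -/
lemma scan_nohit : ∀ (l : List KLetter) (x y X Y : ℤ), Adm x y l → x < X → y < Y →
    scan X Y l = (l, none)
  | [], _, _, _, _ => by intros; rfl
  | A :: l, x, y, X, Y => by
      intro h h1 h2
      have := scan_nohit l _ _ (X + 1) (Y + 1) h.2.2 (by simp; omega) (by simp; omega)
      simp [scan, this]
  | B :: l, x, y, X, Y => by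
      intro h h1 h2
      have h3 := adm_zero h.2.2
      simp at h3
      have := scan_nohit l _ _ (X - 1) Y h.2.2 (by simp; omega) (by simp; omega)
      have h4 : X ≠ 1 := by omega
      simp [scan, this, h4]
  | C :: l, x, y, X, Y => by
      intro h h1 h2
      have h3 := adm_zero h.2.2
      simp at h3
      have := scan_nohit l _ _ X (Y - 1) h.2.2 (by simp; omega) (by simp; omega)
      have h4 : Y ≠ 1 := by omega
      simp [scan, this, h4]

/-- hit on second axis -/
lemma scan_hitC : ∀ (l : List KLetter) (x y : ℤ), 1 ≤ y → Adm x y l → Att y l →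
    ∃ l', scan (x + 1) y l = (l', some C) ∧ Adm x (y - 1) l' ∧ Att (y - 1) l'
  | [], x, y => by intro h1 h2 h3; simp [Att] at h3; omega
  | A :: l, x, y => by
      intro h1 h2 h3
      have h3' : Att (y + 1) l := by rcases h3 with h3 | h3; omega; exact h3
      obtain ⟨l', e1, e2, e3⟩ := scan_hitC l (x + 1) (y + 1) (by omega) h2.2.2 h3'
      refine ⟨A :: l', by simp [scan, e1], ⟨h2.1, by omega, ?_⟩, Or.inr ?_⟩
      · simpa using e2
      · simpa using e3
  | B :: l, x, y => by
      intro h1 h2 h3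
      have h3' : Att y l := by rcases h3 with h3 | h3; omega; simpa using h3
      have h4 := adm_zero h2.2.2
      simp at h4
      obtain ⟨l', e1, e2, e3⟩ := scan_hitC l (x - 1) y (by omega)
        (by simpa [sub_eq_add_neg] using h2.2.2) h3'
      have hx : x ≠ 0 := by omega
      have e1' : scan x y l = (l', some C) := by simpa using e1
      refine ⟨B :: l', by simp [scan, e1', hx], ⟨h2.1, by omega, ?_⟩, Or.inr ?_⟩
      · simpa [sub_eq_add_neg] using e2
      · simpa using e3
  | C :: l, x, y => by
      intro h1 h2 h3
      by_cases hy : y = 1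
      · subst hy
        refine ⟨A :: l, by simp [scan], ⟨h2.1, by omega, ?_⟩, Or.inl (by simp)⟩
        exact adm_mono l _ _ _ _ (by simp) (by simp) h2.2.2
      · have h3' : Att (y - 1) l := by
          rcases h3 with h3 | h3; omega; simpa [sub_eq_add_neg] using h3
        obtain ⟨l', e1, e2, e3⟩ := scan_hitC l x (y - 1) (by omega)
          (by simpa [sub_eq_add_neg] using h2.2.2) h3'
        refine ⟨C :: l', by simp [scan, e1, hy], ⟨h2.1, by omega, ?_⟩, Or.inr ?_⟩
        · simpa [sub_eq_add_neg] using e2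
        · simpa [sub_eq_add_neg] using e3

lemma scan_mono_C : ∀ (l : List KLetter) (x y x' : ℤ) (l' : List KLetter), 1 ≤ x → x ≤ x' →
    scan x y l = (l', some C) → scan x' y l = (l', some C)
  | [], _, _, _, _ => by simp [scan]
  | A :: l, x, y, x', l' => by
      intro h1 h2 h
      simp only [scan, Prod.mk.injEq] at h
      have := scan_mono_C l (x + 1) (y + 1) (x' + 1) _ (by omega) (by omega) (Prod.ext rfl h.2)
      simp [scan, this, ← h.1]
  | B :: l, x, y, x', l' => by
      intro h1 h2 h
      by_cases hx : x = 1
      · simp [scan, hx] at h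
      · simp only [scan, hx, if_false, Prod.mk.injEq] at h
        have := scan_mono_C l (x - 1) y (x' - 1) _ (by omega) (by omega) (Prod.ext rfl h.2)
        have hx' : x' ≠ 1 := by omega
        simp [scan, this, hx', ← h.1]
  | C :: l, x, y, x', l' => by
      intro h1 h2 h
      by_cases hx : y = 1
      · simpa [scan, hx] using h
      · simp only [scan, hx, if_false, Prod.mk.injEq] at h
        have := scan_mono_C l x (y - 1) x' _ (by omega) (by omega) (Prod.ext rfl h.2)
        simp [scan, this, hx, ← h.1]

lemma scan_mono_B : ∀ (l : List KLetter) (x y y' : ℤ) (l' : List KLetter), 1 ≤ y → y ≤ y' →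
    scan x y l = (l', some B) → scan x y' l = (l', some B)
  | [], _, _, _, _ => by simp [scan]
  | A :: l, x, y, y', l' => by
      intro h1 h2 h
      simp only [scan, Prod.mk.injEq] at h
      have := scan_mono_B l (x + 1) (y + 1) (y' + 1) _ (by omega) (by omega) (Prod.ext rfl h.2)
      simp [scan, this, ← h.1]
  | C :: l, x, y, y', l' => by
      intro h1 h2 h
      by_cases hx : y = 1
      · simp [scan, hx] at h
      · simp only [scan, hx, if_false, Prod.mk.injEq] at h
        have := scan_mono_B l x (y - 1) (y' - 1) _ (by omega) (by omega) (Prod.ext rfl h.2)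
        have hx' : y' ≠ 1 := by omega
        simp [scan, this, hx', ← h.1]
  | B :: l, x, y, y', l' => by
      intro h1 h2 h
      by_cases hx : x = 1
      · simpa [scan, hx] using h
      · simp only [scan, hx, if_false, Prod.mk.injEq] at h
        have := scan_mono_B l (x - 1) y y' _ (by omega) (by omega) (Prod.ext rfl h.2)
        simp [scan, this, hx, ← h.1]

/-- Decomposition at the hit. -/
lemma scan_some : ∀ (l : List KLetter) (x y : ℤ) (l' : List KLetter) (c : KLetter),
    1 ≤ x → 1 ≤ y → scan x y l = (l', some c) →
    ∃ g v, l = g ++ c :: v ∧ l' = g ++ A :: v ∧ (scan x y g).2 = none ∧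
      ((c = B ∧ x + dx g = 1) ∨ (c = C ∧ y + dy g = 1))
  | [], _, _, _, _ => by simp [scan]
  | A :: l, x, y, l', c => by
      intro h1 h2 h
      simp only [scan, Prod.mk.injEq] at h
      obtain ⟨g, v, e1, e2, e3, e4⟩ :=
        scan_some l (x + 1) (y + 1) _ c (by omega) (by omega) (Prod.ext rfl h.2)
      refine ⟨A :: g, v, by simp [e1], by simp [← h.1, e2], by simp [scan, e3], ?_⟩
      simpa [add_assoc] using e4
  | B :: l, x, y, l', c => by
      intro h1 h2 h
      by_cases hx : x = 1
      · simp [scan, hx] at h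
        exact ⟨[], l, by simp [h.2], by simp [h.1], by simp [scan], by simp [← h.2, hx]⟩
      · simp only [scan, hx, if_false, Prod.mk.injEq] at h
        obtain ⟨g, v, e1, e2, e3, e4⟩ :=
          scan_some l (x - 1) y _ c (by omega) (by omega) (Prod.ext rfl h.2)
        refine ⟨B :: g, v, by simp [e1], by simp [← h.1, e2], by simp [scan, e3, hx], ?_⟩
        simpa [add_assoc, sub_eq_add_neg] using e4
  | C :: l, x, y, l', c => by
      intro h1 h2 h
      by_cases hx : y = 1
      · simp [scan, hx] at h
        exact ⟨[], l, by simp [h.2], by simp [h.1], by simp [scan], by simp [← h.2, hx]⟩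
      · simp only [scan, hx, if_false, Prod.mk.injEq] at h
        obtain ⟨g, v, e1, e2, e3, e4⟩ :=
          scan_some l x (y - 1) _ c (by omega) (by omega) (Prod.ext rfl h.2)
        refine ⟨C :: g, v, by simp [e1], by simp [← h.1, e2], by simp [scan, e3, hx], ?_⟩
        simpa [add_assoc, sub_eq_add_neg] using e4

lemma scan_length : ∀ (l : List KLetter) (x y : ℤ), (scan x y l).1.length = l.length
  | [], _, _ => by simp [scan]
  | A :: l, x, y => by simp [scan, scan_length l]
  | B :: l, x, y => by by_cases h : x = 1 <;> simp [scan, h, scan_length l]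
  | C :: l, x, y => by by_cases h : y = 1 <;> simp [scan, h, scan_length l]

lemma negL_negL (a : KLetter) : negL (negL a) = a := by cases a <;> rfl

lemma map_neg_neg (l : List KLetter) : (l.map negL).map negL = l := by
  induction l with
  | nil => rfl
  | cons a l ih => simp [negL_negL, ih]

lemma scan_neg : ∀ (l : List KLetter) (x y : ℤ),
    scan y x (l.map negL) = ((scan x y l).1.map negL, (scan x y l).2.map negL)
  | [], _, _ => by simp [scan]
  | A :: l, x, y => by simp [scan, negL, scan_neg l]
  | B :: l, x, y => by by_cases h : x = 1 <;> simp [scan, negL, h, scan_neg l]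
  | C :: l, x, y => by by_cases h : y = 1 <;> simp [scan, negL, h, scan_neg l]

lemma dx_neg (l : List KLetter) : dx (l.map negL) = dy l := by
  induction l with
  | nil => rfl
  | cons a l ih => cases a <;> simp [negL, ih]

lemma dy_neg (l : List KLetter) : dy (l.map negL) = dx l := by
  induction l with
  | nil => rfl
  | cons a l ih => cases a <;> simp [negL, ih]

lemma adm_neg : ∀ (l : List KLetter) (x y : ℤ), Adm x y l → Adm y x (l.map negL)
  | [], _, _ => by simp only [Adm, List.map_nil]; tauto
  | a :: l, x, y => by
      intro h
      have := adm_neg l _ _ h.2.2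
      refine ⟨h.2.1, h.1, ?_⟩
      cases a <;> simpa [negL] using this

/-! ### Promotion -/

def prm : List KLetter → List KLetter
  | [] => []
  | _ :: l => (scan 1 1 l).1 ++ [(scan 1 1 l).2.getD A]

/-- Kreweras words, via heights. -/
def K (w : List KLetter) : Prop := Adm 0 0 w ∧ dx w = 0 ∧ dy w = 0

lemma K_cons {w : List KLetter} (h : K w) (hw : w ≠ []) : ∃ l, w = A :: l := by
  cases w with
  | nil => exact absurd rfl hw
  | cons a l =>
    have := adm_zero h.1.2.2
    cases a
    · exact ⟨l, rfl⟩
    · simp at this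
    · simp at this

lemma K_scan {l : List KLetter} (h : K (A :: l)) : ∃ l' c, scan 1 1 l = (l', some c) := by
  rcases hs : scan 1 1 l with ⟨l', o⟩
  cases o with
  | some c => exact ⟨l', c, rfl⟩
  | none =>
    have := scan_none_pos l 1 1 (by omega) (by omega) (by rw [hs])
    have h2 := h.2.1
    simp at h2
    omega

lemma prm_length (w : List KLetter) : (prm w).length = w.length := by
  cases w with
  | nil => rfl
  | cons a l => simp [prm, scan_length]

lemma prm_iter_length (k : ℕ) (w : List KLetter) : (prm^[k] w).length = w.length := by
  induction k with
  | zero => rfl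
  | succ k ih => rw [Function.iterate_succ_apply', prm_length, ih]

lemma prm_neg {w : List KLetter} : prm (w.map negL) = (prm w).map negL := by
  cases w with
  | nil => rfl
  | cons a l =>
    simp only [List.map_cons, prm, scan_neg l, List.map_append, List.map_nil]
    cases (scan 1 1 l).2 <;> simp [negL]

lemma prm_iter_neg (k : ℕ) (w : List KLetter) :
    prm^[k] (w.map negL) = (prm^[k] w).map negL := by
  induction k with
  | zero => rfl
  | succ k ih => rw [Function.iterate_succ_apply', Function.iterate_succ_apply', ih, prm_neg]


/-! ### From `tau` to `prm` -/

lemma dx_count (w : List KLetter) : dx w = w.count A - w.count B := by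
  induction w with
  | nil => simp
  | cons a l ih => cases a <;> simp [ih] <;> ring

lemma dy_count (w : List KLetter) : dy w = w.count A - w.count C := by
  induction w with
  | nil => simp
  | cons a l ih => cases a <;> simp [ih] <;> ring

lemma length_count (w : List KLetter) : w.length = w.count A + w.count B + w.count C := by
  induction w with
  | nil => simp
  | cons a l ih => cases a <;> simp [ih] <;> ring

lemma adm_iff : ∀ (w : List KLetter) (x y : ℤ),
    Adm x y w ↔ ∀ k, 0 ≤ x + dx (w.take k) ∧ 0 ≤ y + dy (w.take k)
  | [], x, y => by simp [Adm]
  | a :: l, x, y => by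
      simp only [Adm, adm_iff l]
      constructor
      · rintro ⟨h1, h2, h3⟩ k
        cases k with
        | zero => simpa using ⟨h1, h2⟩
        | succ k => have := h3 k; simp; constructor <;> linarith
      · intro h
        have h0 := h 0
        simp at h0
        refine ⟨h0.1, h0.2, fun k => ?_⟩
        have := h (k + 1)
        simp at this
        constructor <;> linarith

lemma isK_iff (n : ℕ) (w : List KLetter) : IsKrewerasWord n w ↔ K w ∧ w.length = 3 * n := by
  have h1 := dx_count w
  have h2 := dy_count w
  have h3 := length_count w
  unfold IsKrewerasWord K
  rw [adm_iff]
  constructor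
  · rintro ⟨h4, h5, h6, h7, h8⟩
    refine ⟨⟨fun k => ?_, by omega, by omega⟩, h4⟩
    have := h8 k
    rw [dx_count, dy_count]
    omega
  · rintro ⟨⟨h4, h5, h6⟩, h7⟩
    refine ⟨h7, by omega, by omega, by omega, fun k => ?_⟩
    have := h4 k
    rw [dx_count, dy_count] at this
    omega

lemma tau_eq (n : ℕ) (a : List KLetter) (x y : KLetter) (b : List KLetter)
    (hw : IsKrewerasWord n (a ++ x :: y :: b)) :
    (0 ≤ dx a + sx y ∧ 0 ≤ dy a + sy y → tau n (a.length + 1) (a ++ x :: y :: b) = a ++ y :: x :: b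
      ∧ IsKrewerasWord n (a ++ y :: x :: b)) ∧
    (¬ (0 ≤ dx a + sx y ∧ 0 ≤ dy a + sy y) →
      tau n (a.length + 1) (a ++ x :: y :: b) = a ++ x :: y :: b) := by
  have e : ((a ++ x :: y :: b).set (a.length + 1 - 1) ((a ++ x :: y :: b).getD (a.length + 1) A)).set
      (a.length + 1) ((a ++ x :: y :: b).getD (a.length + 1 - 1) A) = a ++ y :: x :: b := by
    simp [List.getD_eq_getElem?_getD]
  have key : IsKrewerasWord n (a ++ y :: x :: b) ↔
      (0 ≤ dx a + sx y ∧ 0 ≤ dy a + sy y) := by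
    rw [isK_iff] at hw ⊢
    obtain ⟨⟨h1, h2, h3⟩, h4⟩ := hw
    simp only [K, adm_append, Adm, dx_append, dy_append, dx_cons, dy_cons, List.length_append,
      List.length_cons] at *
    have e1 : 0 + dx a + sx x + sx y = 0 + dx a + sx y + sx x := by ring
    have e2 : 0 + dy a + sy x + sy y = 0 + dy a + sy y + sy x := by ring
    rw [e1, e2] at h1
    simp only [zero_add] at *
    constructor
    · tauto
    · intro h
      refine ⟨⟨⟨h1.1, ?_⟩, by omega, by omega⟩, by omega⟩
      exact ⟨h1.2.1, h1.2.2.1, h.1, h.2, h1.2.2.2.2.2⟩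
  unfold tau
  dsimp only
  constructor
  · intro h
    have hk := key.2 h
    refine ⟨?_, hk⟩
    rw [← e] at hk
    rw [if_pos hk, e]
  · intro h
    rw [← key, ← e] at h
    rw [if_neg h]

lemma tau_isK (n i : ℕ) (w : List KLetter) (hw : IsKrewerasWord n w) :
    IsKrewerasWord n (tau n i w) := by
  unfold tau
  simp only
  split_ifs with h
  · exact h
  · exact hw

lemma split_at (w : List KLetter) (i : ℕ) (h : i + 1 < w.length) :
    ∃ a x y b, w = a ++ x :: y :: b ∧ a.length = i := by
  refine ⟨w.take i, w[i], w[i+1], w.drop (i+2), ?_, by simp; omega⟩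
  rw [← List.drop_eq_getElem_cons, ← List.drop_eq_getElem_cons, List.take_append_drop]

lemma tau_tau (n i : ℕ) (h1 : 1 ≤ i) (h2 : i < 3 * n) (w : List KLetter)
    (hw : IsKrewerasWord n w) : tau n i (tau n i w) = w := by
  obtain ⟨a, x, y, b, rfl, e⟩ := split_at w (i - 1) (by have := hw.1; omega)
  have e : i = a.length + 1 := by omega
  subst e
  have t := tau_eq n a x y b hw
  by_cases h : 0 ≤ dx a + sx y ∧ 0 ≤ dy a + sy y
  · obtain ⟨t1, t2⟩ := t.1 h
    rw [t1]
    refine ((tau_eq n a y x b t2).1 ?_).1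
    have := ((isK_iff _ _).1 hw).1.1
    simp only [adm_append, Adm] at this
    simp at this
    tauto
  · rw [t.2 h, t.2 h]

lemma tau_comm (n i j : ℕ) (h1 : 1 ≤ i) (h2 : i + 2 ≤ j) (h3 : j < 3 * n) (w : List KLetter)
    (hw : IsKrewerasWord n w) : tau n i (tau n j w) = tau n j (tau n i w) := by
  obtain ⟨a, x, y, b, rfl, e⟩ := split_at w (i - 1) (by have := hw.1; omega)
  have hl := hw.1
  simp at hl
  obtain ⟨c, z, t, b, rfl, e'⟩ := split_at b (j - i - 2) (by omega)
  have e : i = a.length + 1 := by omega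
  subst e
  have e' : j = a.length + 2 + c.length + 1 := by omega
  subst e'
  have key : ∀ x y z t, IsKrewerasWord n (a ++ x :: y :: (c ++ z :: t :: b)) →
      (0 ≤ dx (a ++ x :: y :: c) + sx t ∧ 0 ≤ dy (a ++ x :: y :: c) + sy t →
        tau n (a.length + 2 + c.length + 1) (a ++ x :: y :: (c ++ z :: t :: b)) =
         (a ++ x :: y :: (c ++ t :: z :: b)) ∧
         IsKrewerasWord n (a ++ x :: y :: (c ++ t :: z :: b))) ∧
      (¬ (0 ≤ dx (a ++ x :: y :: c) + sx t ∧ 0 ≤ dy (a ++ x :: y :: c) + sy t) →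
        tau n (a.length + 2 + c.length + 1) (a ++ x :: y :: (c ++ z :: t :: b)) =
         (a ++ x :: y :: (c ++ z :: t :: b))) := by
    intro x y z t h
    have := tau_eq n (a ++ x :: y :: c) z t b (by simpa using h)
    have e : (a ++ x :: y :: c).length + 1 = a.length + 2 + c.length + 1 := by simp; omega
    rw [e] at this
    simpa using this
  have sym : (0 ≤ dx (a ++ y :: x :: c) + sx t ∧ 0 ≤ dy (a ++ y :: x :: c) + sy t) ↔
      (0 ≤ dx (a ++ x :: y :: c) + sx t ∧ 0 ≤ dy (a ++ x :: y :: c) + sy t) := by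
    simp only [dx_append, dx_cons, dy_append, dy_cons]
    constructor <;> rintro ⟨h1, h2⟩ <;> constructor <;> linarith
  have t1 := tau_eq n a x y _ hw
  have k1 := key _ _ _ _ hw
  by_cases p : 0 ≤ dx a + sx y ∧ 0 ≤ dy a + sy y <;>
  by_cases q : 0 ≤ dx (a ++ x :: y :: c) + sx t ∧ 0 ≤ dy (a ++ x :: y :: c) + sy t
  · obtain ⟨k1, k2⟩ := k1.1 q
    obtain ⟨t1, t2⟩ := t1.1 p
    rw [k1, t1, ((key _ _ _ _ t2).1 (sym.2 q)).1, ((tau_eq n a x y _ k2).1 p).1]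
  · obtain ⟨t1, t2⟩ := t1.1 p
    rw [k1.2 q, t1, ((key _ _ _ _ t2).2 (by rwa [sym]))]
  · obtain ⟨k1, k2⟩ := k1.1 q
    rw [t1.2 p, k1, (tau_eq n a x y _ k2).2 p]
  · rw [t1.2 p, k1.2 q, t1.2 p]

lemma tauAsc_isK (n k j : ℕ) (w : List KLetter) (hw : IsKrewerasWord n w) :
    IsKrewerasWord n (tauAsc n k j w) := by
  induction j with
  | zero => exact hw
  | succ j ih => exact tau_isK _ _ _ ih

lemma tauAsc_succ (n k j : ℕ) (w : List KLetter) :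
    tauAsc n k (j + 1) w = tauAsc n (k + 1) j (tau n k w) := by
  induction j with
  | zero => rfl
  | succ j ih =>
    rw [tauAsc, ih, tauAsc]
    congr 1; omega

lemma tauDown_eq (n j : ℕ) (w : List KLetter) : tauDown n j w = tauAsc n 1 j w := by
  induction j with
  | zero => rfl
  | succ j ih => rw [tauDown, tauAsc, ih]; congr 1; omega

lemma slide_ne (n : ℕ) (c : KLetter) (hc : c ≠ A) : ∀ (l d : List KLetter),
    IsKrewerasWord n (d ++ c :: l) → tauAsc n (d.length + 1) l.length (d ++ c :: l) = d ++ l ++ [c]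
  | [], d, _ => by simp [tauAsc]
  | y :: l, d, h => by
      have h' := ((isK_iff _ _).1 h).1.1
      simp only [adm_append, Adm] at h'
      have h2 := adm_zero h'.2.2.2.2.2
      have t := (tau_eq n d c y l h).1 (by cases c <;> simp at h2 hc ⊢ <;> omega)
      have ih := slide_ne n c hc l (d ++ [y]) (by simpa using t.2)
      simp only [List.length_cons]
      rw [tauAsc_succ, t.1]
      simpa using ih

lemma slide_A (n : ℕ) : ∀ (l d : List KLetter), IsKrewerasWord n (d ++ A :: l) →
    tauAsc n (d.length + 1) l.length (d ++ A :: l) =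
      d ++ (scan (dx d + 1) (dy d + 1) l).1 ++ [(scan (dx d + 1) (dy d + 1) l).2.getD A]
  | [], d, _ => by simp [tauAsc, scan]
  | y :: l, d, h => by
      have h' := ((isK_iff _ _).1 h).1.1
      simp only [adm_append, Adm] at h'
      have t := tau_eq n d A y l h
      simp only [List.length_cons]
      rw [tauAsc_succ]
      by_cases p : 0 ≤ dx d + sx y ∧ 0 ≤ dy d + sy y
      · obtain ⟨t1, t2⟩ := t.1 p
        have ih := slide_A n l (d ++ [y]) (by simpa using t2)
        rw [t1]
        cases y with
        | A => simpa [scan] using ih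
        | B =>
          simp at p
          have : dx d ≠ 0 := by omega
          simpa [scan, this] using ih
        | C =>
          simp at p
          have : dy d ≠ 0 := by omega
          simpa [scan, this] using ih
      · rw [t.2 p]
        cases y with
        | A => simp at p h'; omega
        | B =>
          simp at p h'
          have e : dx d = 0 := by omega
          have := slide_ne n B (by simp) l (d ++ [A]) (by simpa using h)
          simpa [scan, e] using this
        | C =>
          simp at p h'
          have e : dy d = 0 := by omega
          have := slide_ne n C (by simp) l (d ++ [A]) (by simpa using h)
          simpa [scan, e] using this

lemma pro_eq (n : ℕ) (w : List KLetter) (hw : IsKrewerasWord n w) :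
    tauAsc n 1 (3 * n - 1) w = prm w := by
  have hk := (isK_iff _ _).1 hw
  by_cases h : w = []
  · subst h
    have := hw.1
    simp at this
    subst this
    rfl
  · obtain ⟨l, rfl⟩ := K_cons hk.1 h
    have := slide_A n l [] hw
    have e : 3 * n - 1 = l.length := by have := hw.1; simp at this; omega
    rw [e]
    simpa [prm] using this

lemma K_length {w : List KLetter} (h : K w) : w.length = 3 * w.count A := by
  have h1 := dx_count w
  have h2 := dy_count w
  have h3 := length_count w
  have := h.2
  omega

lemma K_isK {w : List KLetter} (h : K w) : IsKrewerasWord (w.count A) w :=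
  (isK_iff _ _).2 ⟨h, K_length h⟩

lemma prm_K {w : List KLetter} (h : K w) : K (prm w) := by
  rw [← pro_eq _ w (K_isK h)]
  exact ((isK_iff _ _).1 (tauAsc_isK _ _ _ _ (K_isK h))).1

lemma prm_iter_K {w : List KLetter} (h : K w) (k : ℕ) : K (prm^[k] w) := by
  induction k with
  | zero => exact h
  | succ k ih => rw [Function.iterate_succ_apply']; exact prm_K ih

lemma tauAsc_inj (n k j : ℕ) (h1 : 1 ≤ k) (h2 : k + j ≤ 3 * n) (v w : List KLetter)
    (hv : IsKrewerasWord n v) (hw : IsKrewerasWord n w) (h : tauAsc n k j v = tauAsc n k j w) :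
    v = w := by
  induction j with
  | zero => exact h
  | succ j ih =>
    apply ih (by omega)
    rw [tauAsc, tauAsc] at h
    rw [← tau_tau n (k + j) (by omega) (by omega) _ (tauAsc_isK n k j v hv), h,
      tau_tau n (k + j) (by omega) (by omega) _ (tauAsc_isK n k j w hw)]

lemma prm_inj {v w : List KLetter} (hv : K v) (hw : K w) (h : prm v = prm w) : v = w := by
  have hl : v.length = w.length := by rw [← prm_length v, h, prm_length]
  have e := K_length hv
  have e' := K_length hw
  have h1 := K_isK hv
  have h2 := K_isK hw
  have e2 : v.count A = w.count A := by omega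
  rw [← e2] at h2
  by_cases h0 : v.count A = 0
  · have : v = [] := List.eq_nil_of_length_eq_zero (by omega)
    have : w = [] := List.eq_nil_of_length_eq_zero (by omega)
    simp_all
  refine tauAsc_inj (v.count A) 1 (3 * v.count A - 1) (by omega) (by omega) v w h1 h2 ?_
  rw [pro_eq _ _ h1, pro_eq _ _ h2, h]

/-! ### Evacuation and promotion in the group generated by the involutions -/

section Grp
variable {G : Type*} [Group G] (T : ℕ → G)

def gam : ℕ → G
  | 0 => 1
  | j + 1 => T (j + 1) * gam j

def del (k : ℕ) : ℕ → G
  | 0 => 1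
  | j + 1 => T (k + j) * del k j

def ev : ℕ → G
  | 0 => 1
  | j + 1 => ev j * gam T (j + 1)

def evs (N : ℕ) : ℕ → G
  | 0 => 1
  | j + 1 => evs N j * del T (j + 1) (N - (j + 1))

lemma del_gam (k j : ℕ) : del T (k + 1) j * gam T k = gam T (k + j) := by
  induction j with
  | zero => simp [del]
  | succ j ih =>
    rw [del, mul_assoc, ih]
    have : k + (j + 1) = (k + j) + 1 := by omega
    rw [this, gam]
    congr 2; omega

lemma comm_gam (hc : ∀ i j, i + 2 ≤ j → Commute (T i) (T j))
    (i j : ℕ) (h : j + 2 ≤ i) : Commute (T i) (gam T j) := by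
  induction j with
  | zero => exact Commute.one_right _
  | succ j ih => exact Commute.mul_right (hc _ _ h).symm (ih (by omega))

lemma comm_ev (hc : ∀ i j, i + 2 ≤ j → Commute (T i) (T j))
    (i j : ℕ) (h : j + 2 ≤ i) : Commute (T i) (ev T j) := by
  induction j with
  | zero => exact Commute.one_right _
  | succ j ih => exact Commute.mul_right (ih (by omega)) (comm_gam T hc _ _ h)

lemma comm_del_ev (hc : ∀ i j, i + 2 ≤ j → Commute (T i) (T j))
    (k m j : ℕ) (h : j + 2 ≤ k) : Commute (del T k m) (ev T j) := by
  induction m with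
  | zero => exact Commute.one_left _
  | succ m ih => exact Commute.mul_left (comm_ev T hc _ _ (by omega)) ih

lemma pow_eq (hc : ∀ i j, i + 2 ≤ j → Commute (T i) (T j))
    (N k : ℕ) (h : k + 1 ≤ N) : gam T (N - 1) ^ (k + 1) = evs T N (k + 1) * ev T k := by
  induction k with
  | zero =>
    have := del_gam T 0 (N - 1)
    simp [gam] at this
    simp [evs, ev, this]
  | succ k ih =>
    have e : gam T (N - 1) = del T (k + 2) (N - (k + 2)) * gam T (k + 1) := by
      rw [del_gam]; congr 1; omega
    have e2 : evs T N (k + 1 + 1) = evs T N (k + 1) * del T (k + 2) (N - (k + 2)) := rfl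
    rw [pow_succ, ih (by omega), e, ev, e2]
    have := comm_del_ev T hc (k + 2) (N - (k + 2)) k (by omega)
    rw [mul_assoc, ← mul_assoc (ev T k), ← this.eq]
    simp only [mul_assoc]

lemma gam_ev (hc : ∀ i j, i + 2 ≤ j → Commute (T i) (T j))
    (hi : ∀ i, T i * T i = 1) (k : ℕ) : gam T (k + 1) * ev T (k + 1) = ev T k := by
  induction k with
  | zero => simp [gam, ev, hi]
  | succ k ih =>
    have h1 := comm_ev T hc (k + 2) k le_rfl
    calc gam T (k + 1 + 1) * ev T (k + 1 + 1)
        = T (k + 2) * (gam T (k + 1) * ev T (k + 1)) * T (k + 2) * gam T (k + 1) := by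
          rw [ev, gam]; simp only [mul_assoc]
      _ = ev T (k + 1) := by
          rw [ih, h1.eq, mul_assoc (ev T k), hi, mul_one, ev]

lemma ev_ev (hc : ∀ i j, i + 2 ≤ j → Commute (T i) (T j))
    (hi : ∀ i, T i * T i = 1) (k : ℕ) : ev T k * ev T k = 1 := by
  induction k with
  | zero => simp [ev]
  | succ k ih =>
    nth_rewrite 1 [ev]
    rw [mul_assoc, gam_ev T hc hi, ih]

end Grp

noncomputable def TT (n i : ℕ) : Equiv.Perm {w // IsKrewerasWord n w} :=
  if h : 1 ≤ i ∧ i < 3 * n then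
    { toFun := fun w => ⟨tau n i w.1, tau_isK n i w.1 w.2⟩
      invFun := fun w => ⟨tau n i w.1, tau_isK n i w.1 w.2⟩
      left_inv := fun w => Subtype.ext (tau_tau n i h.1 h.2 w.1 w.2)
      right_inv := fun w => Subtype.ext (tau_tau n i h.1 h.2 w.1 w.2) }
  else 1

lemma TT_val (n i : ℕ) (h1 : 1 ≤ i) (h2 : i < 3 * n) (w : {w // IsKrewerasWord n w}) :
    (TT n i w).1 = tau n i w.1 := by
  unfold TT
  rw [dif_pos ⟨h1, h2⟩]
  rfl

lemma TT_comm (n i j : ℕ) (h : i + 2 ≤ j) : Commute (TT n i) (TT n j) := by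
  by_cases h1 : 1 ≤ i
  · by_cases h2 : j < 3 * n
    · apply Equiv.ext
      intro w
      apply Subtype.ext
      simp only [Equiv.Perm.mul_apply]
      rw [TT_val n i (by omega) (by omega), TT_val n j (by omega) (by omega),
        TT_val n j (by omega) (by omega), TT_val n i (by omega) (by omega)]
      exact tau_comm n i j h1 h h2 w.1 w.2
    · have : TT n j = 1 := by unfold TT; rw [dif_neg]; omega
      rw [this]; exact Commute.one_right _
  · have : TT n i = 1 := by unfold TT; rw [dif_neg]; omega
    rw [this]; exact Commute.one_left _

lemma TT_inv (n i : ℕ) : TT n i * TT n i = 1 := by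
  by_cases h : 1 ≤ i ∧ i < 3 * n
  · apply Equiv.ext
    intro w
    apply Subtype.ext
    simp only [Equiv.Perm.mul_apply]
    rw [TT_val n i h.1 h.2, TT_val n i h.1 h.2, tau_tau n i h.1 h.2 w.1 w.2]
    rfl
  · have : TT n i = 1 := by unfold TT; rw [dif_neg h]
    simp [this]

lemma gam_val (n j : ℕ) (h : j < 3 * n) (w : {w // IsKrewerasWord n w}) :
    (gam (TT n) j w).1 = tauDown n j w.1 := by
  induction j with
  | zero => rfl
  | succ j ih =>
    rw [gam, Equiv.Perm.mul_apply, TT_val n _ (by omega) (by omega), ih (by omega), tauDown]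

lemma del_val (n k j : ℕ) (h1 : 1 ≤ k) (h : k + j ≤ 3 * n) (w : {w // IsKrewerasWord n w}) :
    (del (TT n) k j w).1 = tauAsc n k j w.1 := by
  induction j with
  | zero => rfl
  | succ j ih =>
    rw [del, Equiv.Perm.mul_apply, TT_val n _ (by omega) (by omega), ih (by omega), tauAsc]

lemma ev_val (n j : ℕ) (h : j < 3 * n) (w : {w // IsKrewerasWord n w}) :
    (ev (TT n) j w).1 = evacAux n j w.1 := by
  induction j generalizing w with
  | zero => rfl
  | succ j ih =>
    rw [ev, Equiv.Perm.mul_apply, ih (by omega), gam_val n _ h, evacAux]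

lemma evs_val (n j : ℕ) (h : j < 3 * n) (w : {w // IsKrewerasWord n w}) :
    (evs (TT n) (3 * n) j w).1 = evacStarAux n j w.1 := by
  induction j generalizing w with
  | zero => rfl
  | succ j ih =>
    rw [evs, Equiv.Perm.mul_apply, ih (by omega), del_val n _ _ (by omega) (by omega), evacStarAux]

lemma pow_val (n k : ℕ) (h : 0 < n) (w : {w // IsKrewerasWord n w}) :
    ((gam (TT n) (3 * n - 1) ^ k) w).1 = prm^[k] w.1 := by
  induction k with
  | zero => rfl
  | succ k ih =>
    rw [pow_succ', Equiv.Perm.mul_apply, gam_val n _ (by omega), tauDown_eq,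
      pro_eq _ _ (Subtype.property _), ih, Function.iterate_succ_apply']

lemma evac_from_prm (n : ℕ) (hP : ∀ w, K w → prm^[w.length] w = w.map negL) (w : List KLetter)
    (hw : IsKrewerasWord n w) : evacStar n w = (evac n w).map negL := by
  by_cases hn : n = 0
  · subst hn
    have := hw.1
    simp at this
    subst this
    rfl
  have e : 3 * n = 3 * n - 1 + 1 := by omega
  have h1 := pow_eq (TT n) (TT_comm n) (3 * n) (3 * n - 1) (by omega)
  have h2 : evs (TT n) (3 * n) (3 * n - 1 + 1) = evs (TT n) (3 * n) (3 * n - 1) := by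
    rw [evs]
    have : 3 * n - (3 * n - 1 + 1) = 0 := by omega
    rw [this, del, mul_one]
  rw [h2, ← e] at h1
  set E := ev (TT n) (3 * n - 1) with hE
  have h3 : E * E = 1 := ev_ev (TT n) (TT_comm n) (TT_inv n) _
  have h4 : gam (TT n) (3 * n - 1) ^ (3 * n) * E = evs (TT n) (3 * n) (3 * n - 1) := by
    rw [h1, mul_assoc, h3, mul_one]
  have h5 := congrArg (fun f => (f ⟨w, hw⟩).1) h4
  simp only [Equiv.Perm.mul_apply] at h5
  rw [evs_val n _ (by omega), pow_val n _ (by omega)] at h5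
  have h6 := ev_val n (3 * n - 1) (by omega) ⟨w, hw⟩
  have h7 := hP _ ((isK_iff _ _).1 (E ⟨w, hw⟩).2).1
  rw [(E ⟨w, hw⟩).2.1, h5] at h7
  rw [evacStar, evac, h7, hE, h6]

/-! ### Simulation lemmas -/

lemma scan_some_cases {l l' : List KLetter} {x y : ℤ} {c : KLetter} (hx : 1 ≤ x) (hy : 1 ≤ y)
    (h : scan x y l = (l', some c)) :
    (c = B ∨ c = C) ∧ l'.count c + 1 = l.count c ∧ dx l' = dx l + 1 - sx c ∧
      dy l' = dy l + 1 - sy c := by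
  obtain ⟨g, v, rfl, rfl, -, h4⟩ := scan_some l x y l' c hx hy h
  have hc : c = B ∨ c = C := by tauto
  refine ⟨hc, ?_, by simp; ring, by simp; ring⟩
  rcases hc with rfl | rfl <;> simp <;> omega

lemma scan_count : ∀ (l : List KLetter) (x y : ℤ),
    (scan x y l).1.count B ≤ l.count B ∧ (scan x y l).1.count C ≤ l.count C
  | [], _, _ => by simp [scan]
  | A :: l, x, y => by have := scan_count l (x + 1) (y + 1); simpa [scan] using this
  | B :: l, x, y => by
      have := scan_count l (x - 1) y
      by_cases h : x = 1 <;> simp [scan, h] at this ⊢ <;> omega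
  | C :: l, x, y => by
      have := scan_count l x (y - 1)
      by_cases h : y = 1 <;> simp [scan, h] at this ⊢ <;> omega

lemma scan_append_split (p N : List KLetter) (x y : ℤ) :
    ∃ p' N', (scan x y (p ++ N)).1 = p' ++ N' ∧ p'.length = p.length ∧ N'.length = N.length ∧
      N'.count B ≤ N.count B ∧ N'.count C ≤ N.count C := by
  rcases hs : scan x y p with ⟨p', o⟩
  cases o with
  | some c =>
    refine ⟨p', N, by rw [scan_append_some p x y N p' c hs], ?_, rfl, le_rfl, le_rfl⟩
    have := scan_length p x y
    rwa [hs] at this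
  | none =>
    refine ⟨p, _, by rw [scan_append_none p x y N (by rw [hs])], rfl, scan_length _ _ _, ?_⟩
    exact scan_count _ _ _

lemma seg (k : ℕ) : ∀ (p N r : List KLetter), k ≤ p.length → ∃ p' N' r',
    prm^[k] (p ++ N ++ r) = p' ++ N' ++ r' ∧ p'.length + k = p.length ∧ N'.length = N.length ∧
      r'.length = r.length + k ∧ N'.count B ≤ N.count B ∧ N'.count C ≤ N.count C := by
  induction k with
  | zero => intro p N r _; exact ⟨p, N, r, rfl, rfl, rfl, rfl, le_rfl, le_rfl⟩
  | succ k ih =>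
    intro p N r hk
    cases p with
    | nil => simp at hk
    | cons a p =>
      simp at hk
      obtain ⟨q, r1, h1, h2, h3, -⟩ := scan_append_split (p ++ N) r 1 1
      obtain ⟨p1, N1, h4, h5, h6, h7⟩ : ∃ p1 N1, q = p1 ++ N1 ∧ p1.length = p.length ∧
          N1.length = N.length ∧ N1.count B ≤ N.count B ∧ N1.count C ≤ N.count C := by
        rcases hs : scan 1 1 (p ++ N) with ⟨q', o⟩
        have hq : q' = q := by
          cases o with
          | some c =>
            rw [scan_append_some _ _ _ r q' c hs] at h1
            have hl := scan_length (p ++ N) 1 1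
            rw [hs] at hl
            exact List.append_inj_left h1 (by simp at *; omega)
          | none =>
            rw [scan_append_none _ _ _ r (by rw [hs])] at h1
            have hl := scan_none_fst (p ++ N) 1 1 (by rw [hs])
            rw [hs] at hl
            simp only at hl
            rw [hl]
            exact List.append_inj_left h1 (by simp at *; omega)
        obtain ⟨p1, N1, h4, h5⟩ := scan_append_split p N 1 1
        rw [hs] at h4
        exact ⟨p1, N1, by rw [← hq, ← h4], h5⟩
      obtain ⟨p', N', r', e1, e2, e3, e4, e5, e6⟩ := ih p1 N1
        (r1 ++ [(scan 1 1 (p ++ N ++ r)).2.getD A]) (by omega)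
      refine ⟨p', N', r', ?_, by simp; omega, by omega, by simp at e4; omega, by omega, by omega⟩
      rw [Function.iterate_succ_apply, ← e1]
      congr 1
      simp only [List.cons_append, prm]
      rw [h1, h4]
      simp

lemma sim (M Mh : ℕ → List KLetter) (e κ L : ℕ) (c : KLetter)
    (hd : ∀ f ≤ e, dx (M f) = dx (Mh f) ∧ dy (M f) = dy (Mh f))
    (hL : ∀ f ≤ e, (Mh f).length = L)
    (H : ∀ f ≤ e, ∀ X Y : ℤ, 1 ≤ X → 1 ≤ Y → Adm X Y (Mh f) →
      ((scan X Y (Mh f)).2 = none ∧ (scan X Y (M f)).2 = none) ∨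
      (f < e ∧ scan X Y (Mh f) = (Mh (f + 1), some c) ∧ scan X Y (M f) = (M (f + 1), some c)) ∨
      (∃ N c', scan X Y (Mh f) = (N, some c') ∧ N.count C < κ)) (k : ℕ) :
    ∀ (p r : List KLetter) (f : ℕ), p.length = k → f ≤ e → K (p ++ (Mh f ++ r)) →
      (∃ f' r', f' ≤ e ∧ r'.length = r.length + k ∧ prm^[k] (p ++ (M f ++ r)) = M f' ++ r' ∧
        prm^[k] (p ++ (Mh f ++ r)) = Mh f' ++ r') ∨
      (∃ N r', N.length = L ∧ N.count C < κ ∧ prm^[k] (p ++ (Mh f ++ r)) = N ++ r') := by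
  induction k with
  | zero =>
    intro p r f hp hf _
    have : p = [] := List.eq_nil_of_length_eq_zero hp
    subst this
    exact Or.inl ⟨f, r, hf, rfl, rfl, rfl⟩
  | succ k ih =>
    intro p r f hp hf hK
    have hne : p ++ (Mh f ++ r) ≠ [] := by
      intro h; simp at h; simp [h] at hp
    obtain ⟨l, hl⟩ := K_cons hK hne
    cases p with
    | nil => simp at hp
    | cons a p =>
    simp at hl hp
    obtain ⟨rfl, -⟩ := hl
    have hK' := prm_K hK
    simp only [List.cons_append, prm] at hK'
    rcases hs : scan 1 1 p with ⟨p', o⟩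
    have hl := scan_length p 1 1
    rw [hs] at hl
    simp only at hl
    simp only [Function.iterate_succ_apply, List.cons_append, prm]
    cases o with
    | some c' =>
      rw [scan_append_some _ _ _ _ _ _ hs] at hK' ⊢
      rw [scan_append_some _ _ _ _ _ _ hs]
      have := ih p' (r ++ [c']) f (by omega) hf (by simpa using hK')
      simp only [List.append_assoc, Option.getD_some] at this ⊢
      rcases this with ⟨f', r', h1, h2, h3, h4⟩ | h
      · refine Or.inl ⟨f', r', h1, ?_, h3, h4⟩
        simp at h2; omega
      · exact Or.inr h
    | none =>
      have hs2 : (scan 1 1 p).2 = none := by rw [hs]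
      have hpos := scan_none_pos p 1 1 le_rfl le_rfl hs2
      rw [scan_append_none _ _ _ _ hs2] at hK' ⊢
      rw [scan_append_none _ _ _ _ hs2]
      have hA : Adm (1 + dx p) (1 + dy p) (Mh f) := by
        have := hK.1
        simp only [List.cons_append, Adm, adm_append] at this
        simpa using this.2.2.2.1
      rcases H f hf _ _ hpos.1 hpos.2.1 hA with ⟨h1, h2⟩ | ⟨h1, h2, h3⟩ | ⟨N, c', h1, h2⟩
      · rw [scan_append_none _ _ _ _ h1] at hK' ⊢
        rw [scan_append_none _ _ _ _ h2, (hd f hf).1, (hd f hf).2]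
        have hl2 := scan_length r (1 + dx p + dx (Mh f)) (1 + dy p + dy (Mh f))
        generalize scan (1 + dx p + dx (Mh f)) (1 + dy p + dy (Mh f)) r = z at hK' hl2 ⊢
        have := ih p (z.1 ++ [z.2.getD A]) f (by omega) hf (by simpa using hK')
        simp only [List.append_assoc] at this ⊢
        rcases this with ⟨f', r', h1, h2, h3, h4⟩ | h
        · refine Or.inl ⟨f', r', h1, ?_, h3, h4⟩
          simp at h2; omega
        · exact Or.inr h
      · rw [scan_append_some _ _ _ _ _ _ h2] at hK' ⊢
        rw [scan_append_some _ _ _ _ _ _ h3]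
        have := ih p (r ++ [c]) (f + 1) (by omega) h1 (by simpa using hK')
        simp only [List.append_assoc, Option.getD_some] at this ⊢
        rcases this with ⟨f', r', h1, h2, h3, h4⟩ | h
        · refine Or.inl ⟨f', r', h1, ?_, h3, h4⟩
          simp at h2; omega
        · exact Or.inr h
      · rw [scan_append_some _ _ _ _ _ _ h1]
        right
        obtain ⟨p', N', r', e1, e2, e3, e4, e5, e6⟩ := seg k p N (r ++ [c']) (by omega)
        have hp' : p' = [] := List.eq_nil_of_length_eq_zero (by omega)
        subst hp'
        have hNl := scan_length (Mh f) (1 + dx p) (1 + dy p)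
        rw [h1, hL f hf] at hNl
        refine ⟨N', r', by simpa [e3] using hNl, by omega, ?_⟩
        simpa using e1

/-! ### Phase one -/

def V (e : ℕ) (v : List KLetter) : ℕ → List KLetter
  | 0 => v
  | f + 1 => (scan 1 ((e : ℤ) - f) (V e v f)).1

lemma V_inv (e : ℕ) (v : List KLetter) (h1 : Adm 0 e v) (h2 : dx v = 0) (h3 : dy v = -e) :
    ∀ f ≤ e, (Adm 0 ((e : ℤ) - f) (V e v f) ∧ Att ((e : ℤ) - f) (V e v f) ∧ dx (V e v f) = f ∧
      dy (V e v f) = - e + 2 * f ∧ (V e v f).length = v.length) ∧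
      (f < e → scan 1 ((e : ℤ) - f) (V e v f) = (V e v (f + 1), some C)) := by
  have step : ∀ f < e, Adm 0 ((e : ℤ) - f) (V e v f) → Att ((e : ℤ) - f) (V e v f) →
      scan 1 ((e : ℤ) - f) (V e v f) = (V e v (f + 1), some C) ∧
      Adm 0 ((e : ℤ) - f - 1) (V e v (f + 1)) ∧ Att ((e : ℤ) - f - 1) (V e v (f + 1)) := by
    intro f hf a1 a2
    obtain ⟨l', b1, b2, b3⟩ := scan_hitC _ 0 _ (by omega) a1 a2
    simp only [zero_add] at b1
    have : V e v (f + 1) = l' := by rw [V, b1]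
    rw [this]
    exact ⟨b1, b2, b3⟩
  intro f
  induction f with
  | zero =>
    intro _
    have a : Att ((e : ℤ) - (0 : ℕ)) (V e v 0) := att_end _ _ (by simp [V, h3])
    refine ⟨⟨by simpa [V] using h1, a, by simpa [V] using h2, by simpa [V] using h3, rfl⟩, ?_⟩
    intro h
    exact (step 0 h (by simpa [V] using h1) a).1
  | succ f ih =>
    intro hf
    obtain ⟨⟨a1, a2, a3, a4, a5⟩, -⟩ := ih (by omega)
    obtain ⟨b1, b2, b3⟩ := step f (by omega) a1 a2
    have e1 : (e : ℤ) - (f + 1 : ℕ) = e - f - 1 := by push_cast; ring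
    have c := scan_some_cases le_rfl (by omega) b1
    rw [e1]
    simp at c
    refine ⟨⟨b2, b3, by push_cast; omega, by push_cast; omega, ?_⟩, ?_⟩
    · rw [V, scan_length, a5]
    · intro h
      have := step (f + 1) h (by rwa [e1]) (by rwa [e1])
      rw [e1] at this
      exact this.1

lemma att_adm : ∀ (l : List KLetter) (m X Y : ℤ), Att m l → Adm X Y l → m ≤ Y
  | [], m, X, Y => by simp only [Att, Adm]; omega
  | a :: l, m, X, Y => by
      rintro (h | h) h2
      · have := h2.2.1; omega
      · have := att_adm l _ _ _ h h2.2.2; omega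

lemma all_A (l : List KLetter) : dx l ≤ l.length ∧ (dx l = l.length → l = List.replicate l.length A) := by
  induction l with
  | nil => simp
  | cons a l ih =>
    refine ⟨by cases a <;> simp <;> omega, ?_⟩
    intro h
    cases a
    · simp at h
      rw [List.length_cons, List.replicate_succ, ← ih.2 (by omega)]
    · simp at h; omega
    · simp at h; omega

lemma adm_replicate (k : ℕ) (a : KLetter) (x y : ℤ) :
    Adm x y (List.replicate k a) ↔ 0 ≤ x ∧ 0 ≤ y ∧ 0 ≤ x + k * sx a ∧ 0 ≤ y + k * sy a := by
  induction k generalizing x y with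
  | zero => simp [Adm]; tauto
  | succ k ih =>
    rw [List.replicate_succ, Adm, ih]
    cases a <;> simp <;> omega

lemma phase1 (e : ℕ) (u v : List KLetter) (hu : Adm 0 0 u) (hux : dx u = 0) (huy : dy u = e)
    (hv : Adm 0 e v) (hvx : dx v = 0) (hvy : dy v = -e) :
    ∃ t, t.length = u.length ∧ prm^[u.length] (u ++ v) = V e v e ++ t ∧
      prm^[u.length] (u ++ List.replicate e C) = List.replicate e A ++ t := by
  have iv := V_inv e v hv hvx hvy
  have ic := V_inv e (List.replicate e C) (by rw [adm_replicate]; simp) (by simp) (by simp)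
  have hK : K (u ++ (V e (List.replicate e C) 0 ++ [])) := by
    refine ⟨?_, ?_, ?_⟩
    · simp [adm_append, V, hu, hux, huy, adm_replicate]
    · simp [V, hux]
    · simp [V, huy]
  have := sim (V e v) (V e (List.replicate e C)) e 0 e C ?_ ?_ ?_ u.length u [] 0 rfl (by omega) hK
  · rcases this with ⟨f', r', h1, h2, h3, h4⟩ | ⟨_, _, _, h, _⟩
    · have hK2 := prm_iter_K hK u.length
      rw [h4] at hK2
      have hA := ((adm_append _ _ _ _).1 hK2.1).1
      have := att_adm _ _ _ _ (ic f' h1).1.2.1 hA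
      have hf : f' = e := by omega
      subst hf
      refine ⟨r', by simpa using h2, by simpa [V] using h3, ?_⟩
      have i := (ic f' le_rfl).1
      have := (all_A (V f' (List.replicate f' C) f')).2 (by rw [i.2.2.1, i.2.2.2.2]; simp)
      rw [i.2.2.2.2, List.length_replicate] at this
      rw [← this]
      simpa [V] using h4
    · omega
  · intro f hf
    rw [(iv f hf).1.2.2.1, (ic f hf).1.2.2.1, (iv f hf).1.2.2.2.1, (ic f hf).1.2.2.2.1]
    simp
  · intro f hf
    rw [(ic f hf).1.2.2.2.2]; simp
  · intro f hf X Y hX hY hA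
    have := att_adm _ _ _ _ (ic f hf).1.2.1 hA
    by_cases hm : Y = (e : ℤ) - f
    · right; left
      subst hm
      have hfe : f < e := by omega
      exact ⟨hfe, scan_mono_C _ _ _ _ _ le_rfl hX ((ic f hf).2 hfe),
        scan_mono_C _ _ _ _ _ le_rfl hX ((iv f hf).2 hfe)⟩
    · left
      rw [scan_nohit _ _ _ X Y (ic f hf).1.1 (by omega) (by omega),
        scan_nohit _ _ _ X Y (iv f hf).1.1 (by omega) (by omega)]
      simp

/-! ### Phase two -/

lemma scan_repA (k : ℕ) (l : List KLetter) (x y : ℤ) : scan x y (List.replicate k A ++ l) =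
    (List.replicate k A ++ (scan (x + k) (y + k) l).1, (scan (x + k) (y + k) l).2) := by
  induction k generalizing x y with
  | zero => simp
  | succ k ih =>
    have e1 : x + 1 + k = x + (k + 1 : ℕ) := by push_cast; ring
    have e2 : y + 1 + k = y + (k + 1 : ℕ) := by push_cast; ring
    rw [List.replicate_succ, List.cons_append, scan, ih, e1, e2]
    rfl

def W (e : ℕ) (t : List KLetter) : ℕ → List KLetter
  | 0 => t
  | f + 1 => (scan ((e : ℤ) - f) ((e : ℤ) - f) (W e t f)).1

lemma W_length (e : ℕ) (t : List KLetter) (f : ℕ) : (W e t f).length = t.length := by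
  induction f with
  | zero => rfl
  | succ f ih => rw [W, scan_length, ih]

/-- contradiction when a non-`B` is created among the last letters -/
lemma bad_zone (k f e : ℕ) (p N ub : List KLetter) (hk : k ≤ p.length) (hN : N.length = f + 1)
    (hub : ub.length + k = p.length) (he : e = f + 1 + k) (hc : N.count B ≤ f)
    (h : prm^[k] (p ++ N) = ub ++ List.replicate e B) : False := by
  obtain ⟨p', N', r', e1, e2, e3, e4, e5, e6⟩ := seg k p N [] hk
  simp only [List.append_nil] at e1
  rw [h, List.append_assoc] at e1
  have h2 := List.append_inj_right e1 (by omega)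
  have : N'.count B = f + 1 := by
    have h3 : N' = (List.replicate e B).take (f + 1) := by
      rw [h2, List.take_append_of_le_length (by omega), List.take_of_length_le (by omega)]
    rw [h3, List.take_replicate, List.count_replicate_self]
    omega
  omega

lemma tfam (e : ℕ) (t ub : List KLetter) (hK : K (List.replicate e A ++ t))
    (hl : ub.length = t.length)
    (hP : prm^[e] (List.replicate e A ++ t) = ub ++ List.replicate e B) :
    ∀ f ≤ e, prm^[f] (List.replicate e A ++ t) =
        List.replicate (e - f) A ++ (W e t f ++ List.replicate f B) ∧
      (f < e → scan ((e : ℤ) - f) ((e : ℤ) - f) (W e t f) = (W e t (f + 1), some B)) := by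
  have step : ∀ f < e, prm^[f] (List.replicate e A ++ t) =
        List.replicate (e - f) A ++ (W e t f ++ List.replicate f B) →
      scan ((e : ℤ) - f) ((e : ℤ) - f) (W e t f) = (W e t (f + 1), some B) ∧
      prm^[f + 1] (List.replicate e A ++ t) =
        List.replicate (e - (f + 1)) A ++ (W e t (f + 1) ++ List.replicate (f + 1) B) := by
    intro f hf h
    obtain ⟨k, hk⟩ : ∃ k, e = f + 1 + k := ⟨e - (f + 1), by omega⟩
    have hef : e - f = k + 1 := by omega
    have hef' : e - (f + 1) = k := by omega
    have hz : (1 : ℤ) + k = (e : ℤ) - f := by omega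
    have hK1 := prm_iter_K hK f
    have hP' : prm^[k] (prm^[f + 1] (List.replicate e A ++ t)) = ub ++ List.replicate e B := by
      rw [← hP, ← Function.iterate_add_apply]
      congr 2; omega
    rw [Function.iterate_succ_apply'] at hP' ⊢
    rw [h, hef, List.replicate_succ, List.cons_append] at hK1 hP' ⊢
    obtain ⟨l', c, hlc⟩ := K_scan hK1
    rw [prm, hlc] at hP' ⊢
    rw [scan_repA, hz] at hlc
    simp only [Option.getD_some] at hP' ⊢
    rw [hef']
    have hWl := W_length e t f
    rcases hs : scan ((e : ℤ) - f) ((e : ℤ) - f) (W e t f) with ⟨W', o⟩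
    have hW : W e t (f + 1) = W' := by rw [W, hs]
    have hWl' := W_length e t (f + 1)
    rw [hW] at hWl' ⊢
    cases o with
    | some c' =>
      rw [scan_append_some _ _ _ _ _ _ hs] at hlc
      simp at hlc
      obtain ⟨rfl, rfl⟩ := hlc
      by_cases hcB : c' = B
      · subst hcB
        refine ⟨rfl, ?_⟩
        rw [List.replicate_succ' (n := f)]
        simp
      · exfalso
        refine bad_zone k f e (List.replicate k A ++ W') (List.replicate f B ++ [c']) ub
          (by simp) (by simp) (by simp; omega) hk ?_ (by simpa using hP')
        simp [hcB]
    | none =>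
      exfalso
      rw [scan_append_none _ _ _ _ (by rw [hs])] at hlc
      have hpos := scan_none_pos _ _ _ (by omega) (by omega) (by rw [hs] :
        (scan ((e : ℤ) - f) ((e : ℤ) - f) (W e t f)).2 = none)
      simp only [Prod.mk.injEq] at hlc
      obtain ⟨hlc1, hlc2⟩ := hlc
      have hcs := scan_some_cases hpos.1 hpos.2.1 (Prod.ext rfl hlc2)
      have hsl := scan_length (List.replicate f B) ((e : ℤ) - f + dx (W e t f))
        ((e : ℤ) - f + dy (W e t f))
      generalize scan ((e : ℤ) - f + dx (W e t f)) ((e : ℤ) - f + dy (W e t f))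
        (List.replicate f B) = z at *
      have hc : c = B := by
        have : 0 < (List.replicate f B).count c := by omega
        exact List.eq_of_mem_replicate (List.count_pos_iff.1 this)
      subst hc
      subst hlc1
      refine bad_zone k f e (List.replicate k A ++ W e t f) (z.1 ++ [B]) ub
          (by simp) (by simpa using hsl) (by simp; omega) hk ?_ (by simpa using hP')
      have := hcs.2.1
      rw [List.count_replicate_self] at this
      rw [List.count_append, List.count_singleton_self, this]
  intro f
  induction f with
  | zero =>
    intro _
    have h0 : prm^[0] (List.replicate e A ++ t) =
        List.replicate (e - 0) A ++ (W e t 0 ++ List.replicate 0 B) := by simp [W]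
    exact ⟨h0, fun h => (step 0 h h0).1⟩
  | succ f ih =>
    intro hf
    have h0 := (step f (by omega) (ih (by omega)).1).2
    exact ⟨h0, fun h => (step (f + 1) h h0).1⟩

lemma W_inv (e : ℕ) (t ub : List KLetter) (hK : K (List.replicate e A ++ t))
    (hl : ub.length = t.length)
    (hP : prm^[e] (List.replicate e A ++ t) = ub ++ List.replicate e B) :
    ∀ f ≤ e, Adm ((e : ℤ) - f) ((e : ℤ) - f) (W e t f) ∧ dx (W e t f) = -e + 2 * f ∧
      dy (W e t f) = -e + f := by
  intro f hf
  have h := (tfam e t ub hK hl hP f hf).1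
  have hk := prm_iter_K hK f
  rw [h] at hk
  obtain ⟨h1, h2, h3⟩ := hk
  rw [adm_append, adm_append] at h1
  simp at h1 h2 h3
  rw [Nat.cast_sub hf] at *
  exact ⟨h1.2.1, by omega, by omega⟩

lemma scan_repB (k : ℕ) (l : List KLetter) (Y : ℤ) :
    scan (k + 1) Y (List.replicate (k + 1) B ++ l) = (List.replicate k B ++ A :: l, some B) := by
  induction k with
  | zero => simp [scan]
  | succ k ih =>
    rw [List.replicate_succ, List.cons_append, scan]
    have : ((k + 1 : ℕ) : ℤ) + 1 ≠ 1 := by push_cast; omega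
    rw [if_neg this]
    have e : ((k + 1 : ℕ) : ℤ) + 1 - 1 = k + 1 := by push_cast; ring
    rw [e, ih]
    simp [List.replicate_succ]

def P (w : List KLetter) : Prop := prm^[w.length] w = w.map negL

/-- `prm^[k](A^e B^e v)` -/
lemma prm_AB (e : ℕ) (v : List KLetter) (k : ℕ) (hk : k ≤ e) :
    prm^[k] (List.replicate e A ++ (List.replicate e B ++ v)) =
      List.replicate (e - k) A ++ (List.replicate (e - k) B ++ (List.replicate k A ++
        (v ++ List.replicate k B))) := by
  induction k with
  | zero => simp
  | succ k ih =>
    rw [Function.iterate_succ_apply', ih (by omega)]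
    obtain ⟨j, hj⟩ : ∃ j, e - k = j + 1 := ⟨e - k - 1, by omega⟩
    have hj' : e - (k + 1) = j := by omega
    rw [hj, hj']
    nth_rewrite 1 [List.replicate_succ]
    rw [List.cons_append, prm, scan_repA, add_comm (1 : ℤ), scan_repB]
    rw [List.replicate_succ' (n := k) (a := B), List.replicate_succ (n := k) (a := A)]
    simp

lemma prm_AB_e (e : ℕ) (v : List KLetter) :
    prm^[e] (List.replicate e A ++ (List.replicate e B ++ v)) =
      List.replicate e A ++ (v ++ List.replicate e B) := by
  have := prm_AB e v e le_rfl
  simpa using this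

lemma prm_AC_e (e : ℕ) (v : List KLetter) :
    prm^[e] (List.replicate e A ++ (List.replicate e C ++ v)) =
      List.replicate e A ++ (v ++ List.replicate e C) := by
  have := prm_iter_neg e (List.replicate e A ++ (List.replicate e B ++ v.map negL))
  rw [prm_AB_e] at this
  simpa [negL, map_neg_neg, -List.map_map] using this

lemma prm_ABC_twice (e : ℕ) :
    prm^[e + e] (List.replicate e A ++ (List.replicate e B ++ List.replicate e C)) =
      List.replicate e A ++ (List.replicate e B ++ List.replicate e C) := by
  rw [Function.iterate_add_apply, prm_AB_e, prm_AC_e]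

lemma P_ABC (e : ℕ) : P (List.replicate e A ++ (List.replicate e B ++ List.replicate e C)) := by
  unfold P
  have : (List.replicate e A ++ (List.replicate e B ++ List.replicate e C)).length = e + (e + e) := by
    simp
  rw [this, Function.iterate_add_apply, prm_ABC_twice, prm_AB_e]
  simp [negL]

lemma lemR (e : ℕ) (u v : List KLetter) (hu : Adm 0 0 u) (hux : dx u = 0) (huy : dy u = e)
    (hv : Adm 0 e v) (hvx : dx v = 0) (hvy : dy v = -e)
    (h1 : P (u ++ List.replicate e C))
    (h2 : P (List.replicate e A ++ (List.replicate e B ++ v))) : P (u ++ v) := by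
  obtain ⟨t, ht, htv, htc⟩ := phase1 e u v hu hux huy hv hvx hvy
  have hVl := ((V_inv e v hv hvx hvy) e le_rfl).1.2.2.2.2
  have hKC : K (u ++ List.replicate e C) := by
    refine ⟨?_, ?_, ?_⟩
    · simp [adm_append, hu, hux, huy, adm_replicate]
    · simp [hux]
    · simp [huy]
  -- the block `A^e B^e`
  have hhat : prm^[e + e] (List.replicate e A ++ (List.replicate e B ++ v)) =
      V e v e ++ (List.replicate e B ++ List.replicate e C) := by
    obtain ⟨t', ht', htv', htc'⟩ := phase1 e (List.replicate e A ++ List.replicate e B) v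
      (by simp [adm_append, adm_replicate]) (by simp) (by simp) hv hvx hvy
    simp only [List.length_append, List.length_replicate, List.append_assoc] at htv' htc'
    rw [prm_ABC_twice] at htc'
    rw [htv', List.append_cancel_left htc']
  have hKhat : K (List.replicate e A ++ (List.replicate e B ++ v)) := by
    refine ⟨?_, ?_, ?_⟩
    · simpa [adm_append, adm_replicate] using hv
    · simp [hvx]
    · simp [hvy]
  -- the family `W`
  have hKt : K (List.replicate e A ++ t) := by
    rw [← htc]; exact prm_iter_K hKC _
  have hPt : prm^[e] (List.replicate e A ++ t) = u.map negL ++ List.replicate e B := by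
    unfold P at h1
    rw [List.length_append, List.length_replicate, add_comm, Function.iterate_add_apply, htc] at h1
    rw [h1]
    simp [negL]
  have hul : (u.map negL).length = t.length := by simp [ht]
  have tf := tfam e t _ hKt hul hPt
  have wi := W_inv e t _ hKt hul hPt
  have hWe : W e t e = u.map negL := by
    have := (tf e le_rfl).1
    rw [hPt] at this
    simp at this
    exact this.symm
  -- simulation
  set Mh : ℕ → List KLetter := fun f => List.replicate (e - f) B ++
    (List.replicate f A ++ List.replicate e C) with hMh
  have hMx : ∀ f ≤ e, dx (Mh f) = -e + 2 * f := by
    intro f hf; simp [hMh, Nat.cast_sub hf]; ring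
  have hMy : ∀ f ≤ e, dy (Mh f) = -e + f := by
    intro f hf; simp [hMh]; ring
  have hMA : ∀ f ≤ e, Adm ((e : ℤ) - f) ((e : ℤ) - f) (Mh f) := by
    intro f hf
    simp [hMh, adm_append, adm_replicate, Nat.cast_sub hf]
    omega
  have hKV : K (V e v e ++ (Mh 0 ++ [])) := by
    have : V e v e ++ (Mh 0 ++ []) = V e v e ++ (List.replicate e B ++ List.replicate e C) := by
      simp [hMh]
    rw [this, ← hhat]
    exact prm_iter_K hKhat _
  have hfin : prm^[v.length] (V e v e ++ (Mh 0 ++ [])) =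
      List.replicate e A ++ List.replicate e C ++ v.map negL := by
    unfold P at h2
    have hl : (List.replicate e A ++ (List.replicate e B ++ v)).length = v.length + (e + e) := by
      simp; omega
    rw [hl, Function.iterate_add_apply, hhat] at h2
    simpa [hMh, negL] using h2
  have hsim := sim (W e t) Mh e e (e + e) B ?_ ?_ ?_ v.length (V e v e) [] 0 hVl (by omega) hKV
  · have hW0 : W e t 0 = t := rfl
    rcases hsim with ⟨f', r', g1, g2, g3, g4⟩ | ⟨N, r', g1, g2, g3⟩
    · rw [hfin] at g4
      have g5 := List.append_inj g4 (by simp [hMh]; omega)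
      have g6 : f' = e := by
        have := congrArg (List.count A) g5.1
        simp [hMh, List.count_replicate] at this
        omega
      subst g6
      unfold P
      rw [List.length_append, add_comm, Function.iterate_add_apply, htv]
      rw [hW0, List.append_nil] at g3
      rw [g3, hWe, ← g5.2]
      simp
    · exfalso
      rw [hfin] at g3
      have g5 := List.append_inj_left g3 (by simp [g1])
      rw [← g5] at g2
      simp [List.count_replicate] at g2
  · intro f hf
    rw [hMx f hf, hMy f hf, (wi f hf).2.1, (wi f hf).2.2]
    simp
  · intro f hf
    simp [hMh]; omega
  · intro f hf X Y hX hY hA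
    have b1 : (e : ℤ) - f ≤ Y := by
      have := (adm_end hA).2
      rw [hMy f hf] at this
      omega
    have b2 : (e : ℤ) - f ≤ X := by
      simp only [hMh] at hA
      rw [adm_append, adm_replicate] at hA
      have := hA.1.2.2.1
      rw [Nat.cast_sub hf] at this
      simp at this
      omega
    by_cases c1 : X = (e : ℤ) - f
    · right; left
      have hfe : f < e := by omega
      refine ⟨hfe, ?_, ?_⟩
      · obtain ⟨j, hj⟩ : ∃ j, e - f = j + 1 := ⟨e - f - 1, by omega⟩
        have hj' : e - (f + 1) = j := by omega
        have hX : X = j + 1 := by omega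
        simp only [hMh]
        rw [hj, hj', hX, scan_repB, List.replicate_succ (n := f)]
        simp
      · rw [c1]
        exact scan_mono_B _ _ _ _ _ (by omega) b1 ((tf f hf).2 hfe)
    · by_cases c2 : Y = (e : ℤ) - f
      · right; right
        obtain ⟨l', d1, d2, d3⟩ := scan_hitC (Mh f) (X - 1) Y hY
          (adm_mono _ _ _ _ _ (by omega) b1 (hMA f hf))
          (att_end _ _ (by rw [hMy f hf, c2]; ring))
        simp only [sub_add_cancel] at d1
        refine ⟨l', C, d1, ?_⟩
        have := (scan_some_cases hX hY d1).2.1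
        have hc : (Mh f).count C = e := by simp [hMh, List.count_replicate]
        omega
      · left
        rw [scan_nohit _ _ _ X Y (hMA f hf) (by omega) (by omega),
          scan_nohit _ _ _ X Y (wi f hf).1 (by omega) (by omega)]
        simp

/-! ### The main induction -/

lemma K_neg {w : List KLetter} (h : K w) : K (w.map negL) :=
  ⟨adm_neg _ _ _ h.1, by rw [dx_neg, h.2.2], by rw [dy_neg, h.2.1]⟩

lemma P_of_neg {w : List KLetter} (h : P (w.map negL)) : P w := by
  unfold P at *
  rw [List.length_map, prm_iter_neg] at h
  rw [← map_neg_neg (prm^[w.length] w), h, map_neg_neg]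

lemma P_prm {w : List KLetter} (h : P w) : P (prm w) := by
  unfold P at *
  rw [prm_length, ← Function.iterate_succ_apply, Function.iterate_succ_apply', h, prm_neg]

lemma P_of_prm {w : List KLetter} (hK : K w) (h : P (prm w)) : P w := by
  unfold P at *
  rw [prm_length, ← Function.iterate_succ_apply, Function.iterate_succ_apply', ← prm_neg] at h
  exact prm_inj (prm_iter_K hK _) (K_neg hK) h

lemma P_of_iter {w : List KLetter} (hK : K w) (k : ℕ) (h : P (prm^[k] w)) : P w := by
  induction k with
  | zero => exact h
  | succ k ih =>
    rw [Function.iterate_succ_apply'] at h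
    exact ih (P_of_prm (prm_iter_K hK k) h)

lemma P_nil : P [] := rfl

section Ind
variable {L : ℕ}

lemma stepA (IH : ∀ w, K w → w.length < L → P w) (d : ℕ) (g : List KLetter) (hg : Adm 0 0 g)
    (hx : dx g = 0) (hy : dy g = d)
    (hL : (A :: (g ++ B :: List.replicate (d + 1) C)).length ≤ L) :
    P (A :: (g ++ B :: List.replicate (d + 1) C)) := by
  have hK : K (A :: (g ++ B :: List.replicate (d + 1) C)) := by
    have := adm_mono g 0 0 1 1 (by omega) (by omega) hg
    refine ⟨?_, ?_, ?_⟩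
    · simp [Adm, adm_append, adm_replicate, this, hx, hy]
      omega
    · simp [hx]
    · simp [hy]
  apply P_of_prm hK
  have e1 : prm (A :: (g ++ B :: List.replicate (d + 1) C)) =
      g ++ (A :: (List.replicate (d + 1) C ++ [B])) := by
    rw [prm, scan_append_none _ _ _ _ (by rw [scan_nohit g 0 0 1 1 hg (by omega) (by omega)])]
    simp [scan, hx]
  rw [e1]
  refine lemR d g _ hg hx hy ?_ ?_ ?_ ?_ ?_
  · simp [Adm, adm_append, adm_replicate]
    omega
  · simp
  · simp
  · apply IH
    · refine ⟨?_, by simp [hx], by simp [hy]⟩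
      simp [adm_append, adm_replicate, hg, hx, hy]
    · simp at hL ⊢; omega
  · have := prm_AB (d + 1) (List.replicate (d + 1) C) 1 (by omega)
    have h2 := P_prm (P_ABC (d + 1))
    simp only [Function.iterate_one] at this
    rw [this] at h2
    simpa using h2

lemma stepB (IH : ∀ w, K w → w.length < L → P w) (d : ℕ) (g v : List KLetter) (hg : Adm 0 0 g)
    (hx : dx g = 0) (hy : dy g = d) (hK : K (A :: (g ++ B :: v)))
    (hL : (A :: (g ++ B :: v)).length ≤ L)
    (h : P (List.replicate (d + 1) A ++ (List.replicate (d + 1) B ++ v))) :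
    P (A :: (g ++ B :: v)) := by
  have h1 := adm_mono g 0 0 1 1 (by omega) (by omega) hg
  obtain ⟨k1, k2, k3⟩ := hK
  have e : A :: (g ++ B :: v) = (A :: (g ++ [B])) ++ v := by simp
  have e' : A :: (g ++ B :: List.replicate (d + 1) C) =
    (A :: (g ++ [B])) ++ List.replicate (d + 1) C := by simp
  rw [e] at k1 ⊢
  rw [adm_append] at k1
  simp [hx, hy] at k1 k2 k3
  have hlv : d + 1 ≤ v.length := by
    have q1 := dy_count v
    have q2 := length_count v
    omega
  refine lemR (d + 1) _ v k1.1 ?_ ?_ ?_ ?_ ?_ ?_ h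
  · simp [hx]
  · simp [hy]; ring
  · push_cast; rw [add_comm]; exact k1.2
  · omega
  · push_cast; omega
  · rw [← e']
    apply stepA IH d g hg hx hy
    simp at hL ⊢; omega

lemma stepB' (IH : ∀ w, K w → w.length < L → P w) (d : ℕ) (g v : List KLetter) (hg : Adm 0 0 g)
    (hx : dy g = 0) (hy : dx g = d) (hK : K (A :: (g ++ C :: v)))
    (hL : (A :: (g ++ C :: v)).length ≤ L)
    (h : P (List.replicate (d + 1) A ++ (List.replicate (d + 1) C ++ v))) :
    P (A :: (g ++ C :: v)) := by
  apply P_of_neg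
  have hK' := K_neg hK
  simp only [List.map_cons, List.map_append, negL] at hK' ⊢
  refine stepB IH d _ _ (adm_neg _ _ _ hg) (by rw [dx_neg, hx]) (by rw [dy_neg, hy]) hK'
    (by simpa using hL) ?_
  apply P_of_neg
  simpa [negL, map_neg_neg, -List.map_map] using h

lemma all_C (l : List KLetter) : -(l.length : ℤ) ≤ dy l ∧
    (dy l = - (l.length : ℤ) → l = List.replicate l.length C) := by
  induction l with
  | nil => simp
  | cons a l ih =>
    refine ⟨by cases a <;> simp <;> omega, ?_⟩
    intro h
    cases a
    · simp at h; omega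
    · simp at h; omega
    · simp at h
      rw [List.length_cons, List.replicate_succ, ← ih.2 (by omega)]

lemma stepC (IH : ∀ w, K w → w.length < L → P w) (j : ℕ) : ∀ (e : ℕ) (v : List KLetter),
    L - e = j → 1 ≤ e → K (List.replicate e A ++ (List.replicate e B ++ v)) →
    (List.replicate e A ++ (List.replicate e B ++ v)).length ≤ L →
    P (List.replicate e A ++ (List.replicate e B ++ v)) := by
  induction j using Nat.strong_induction_on with
  | _ j ihj =>
  intro e v hj he hK hL
  have hv : Adm 0 e v ∧ dx v = 0 ∧ dy v = -e := by
    obtain ⟨k1, k2, k3⟩ := hK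
    rw [adm_append, adm_append] at k1
    simp at k1 k2 k3
    exact ⟨k1.2.2, k2, by omega⟩
  obtain ⟨l', s1, -, -⟩ := scan_hitC v (e - 1) e (by omega)
    (adm_mono v 0 e _ _ (by omega) le_rfl hv.1) (att_end _ _ (by rw [hv.2.2]; ring))
  simp only [sub_add_cancel] at s1
  obtain ⟨g, v2, rfl, -, s3, s4⟩ := scan_some _ _ _ _ _ (by omega) (by omega) s1
  have s4 : (e : ℤ) + dy g = 1 := by simpa using s4
  have hpos := scan_none_pos g e e (by omega) (by omega) s3
  have hgx : 0 ≤ dx g := by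
    have := (adm_end ((adm_append _ _ _ _).1 hv.1).1).1
    omega
  obtain ⟨d', hd'⟩ := Int.eq_ofNat_of_zero_le hgx
  obtain ⟨e', rfl⟩ : ∃ e', e = e' + 1 := ⟨e - 1, by omega⟩
  have hK1 := prm_iter_K hK (e' + 1)
  rw [prm_AB_e] at hK1
  have eqw : List.replicate (e' + 1) A ++ ((g ++ C :: v2) ++ List.replicate (e' + 1) B) =
    A :: ((List.replicate e' A ++ g) ++ C :: (v2 ++ List.replicate (e' + 1) B)) := by
    simp [List.replicate_succ]
  simp only [List.length_append, List.length_replicate, List.length_cons] at hL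
  have hcnt1 := dx_count g
  have hcnt2 := dy_count g
  have hcnt3 := length_count g
  by_cases hcase : d' = 0 ∧ g.length = e'
  · have hg := (all_C g).2 (by omega)
    rw [hcase.2] at hg
    subst hg
    have e1 : List.replicate (e' + 1) A ++ (List.replicate (e' + 1) B ++
        (List.replicate e' C ++ C :: v2)) = (List.replicate (e' + 1) A ++
          (List.replicate (e' + 1) B ++ List.replicate (e' + 1) C)) ++ v2 := by
      rw [List.replicate_succ' (n := e') (a := C)]; simp
    obtain ⟨hv1, hv2, hv3⟩ := hv
    have hKv : K v2 := by
      rw [adm_append] at hv1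
      simp [Adm] at hv1 hv2 hv3
      exact ⟨hv1.2, by omega, by omega⟩
    rw [e1]
    refine lemR 0 _ v2 ?_ ?_ ?_ ?_ ?_ ?_ ?_ ?_
    · simp [adm_append, adm_replicate]; omega
    · simp
    · simp
    · simpa using hKv.1
    · exact hKv.2.1
    · simpa using hKv.2.2
    · simpa using P_ABC (e' + 1)
    · simpa using IH v2 hKv (by omega)
  · apply P_of_iter hK (e' + 1)
    rw [prm_AB_e, eqw]
    rw [eqw] at hK1
    refine stepB' IH (e' + d') _ _ ?_ ?_ ?_ hK1 ?_ ?_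
    · rw [adm_append, adm_replicate]
      have := hpos.2.2
      simp at this
      simpa using this
    · push_cast at s4; simp; omega
    · simp [hd']
    · simp; omega
    · have hK2 : K (List.replicate (e' + d' + 1) A ++ (List.replicate (e' + d' + 1) C ++
          (v2 ++ List.replicate (e' + 1) B))) := by
        obtain ⟨k1, k2, k3⟩ := hK1
        have e3 : A :: ((List.replicate e' A ++ g) ++ C :: (v2 ++ List.replicate (e' + 1) B)) =
          (A :: ((List.replicate e' A ++ g) ++ [C])) ++ (v2 ++ List.replicate (e' + 1) B) := by
          simp
        rw [e3, adm_append] at k1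
        have k1 := k1.2
        push_cast at s4
        have q1 : 0 + dx (A :: ((List.replicate e' A ++ g) ++ [C])) = (e' : ℤ) + d' + 1 := by
          simp [hd']; omega
        have q2 : 0 + dy (A :: ((List.replicate e' A ++ g) ++ [C])) = 0 := by
          simp; omega
        rw [q1, q2] at k1
        refine ⟨?_, ?_, ?_⟩
        · rw [adm_append, adm_append, adm_replicate, adm_replicate]
          simp
          exact ⟨by omega, k1⟩
        · simp at k2 ⊢; omega
        · simp at k3 ⊢; omega
      by_cases hlt : (List.replicate (e' + d' + 1) A ++ (List.replicate (e' + d' + 1) C ++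
          (v2 ++ List.replicate (e' + 1) B))).length < L
      · exact IH _ hK2 hlt
      · simp at hlt
        push_cast at s4
        apply P_of_neg
        have hK3 := K_neg hK2
        simp only [List.map_append, List.map_replicate, negL] at hK3 ⊢
        have hne : d' ≠ 0 := by
          intro h0
          apply hcase
          refine ⟨h0, ?_⟩
          omega
        refine ihj (L - (e' + d' + 1)) (by omega) (e' + d' + 1) _ rfl (by omega) hK3 ?_
        simp
        omega

lemma caseB (IH : ∀ w, K w → w.length < L → P w) (g v : List KLetter) (hg : Adm 0 0 g)
    (hx : dx g = 0) (hK : K (A :: (g ++ B :: v))) (hL : (A :: (g ++ B :: v)).length ≤ L) :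
    P (A :: (g ++ B :: v)) := by
  have hgy : 0 ≤ dy g := by have := (adm_end hg).2; omega
  obtain ⟨d, hd⟩ := Int.eq_ofNat_of_zero_le hgy
  refine stepB IH d g v hg hx hd hK hL ?_
  have hcnt1 := dx_count g
  have hcnt2 := dy_count g
  have hcnt3 := length_count g
  refine stepC IH _ (d + 1) v rfl (by omega) ?_ ?_
  · obtain ⟨k1, k2, k3⟩ := hK
    have e : A :: (g ++ B :: v) = (A :: (g ++ [B])) ++ v := by simp
    rw [e, adm_append] at k1
    have k1 := k1.2
    simp [hx, hd] at k1 k2 k3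
    refine ⟨?_, ?_, ?_⟩
    · rw [adm_append, adm_append, adm_replicate, adm_replicate]
      simp
      refine ⟨by omega, ?_⟩
      rwa [add_comm]
    · simp [k2]
    · simp; omega
  · simp at hL ⊢; omega

end Ind

lemma P_main (L : ℕ) : ∀ w, K w → w.length ≤ L → P w := by
  induction L using Nat.strong_induction_on with
  | _ L ihL =>
  intro w hK hL
  have IH : ∀ w, K w → w.length < L → P w := fun w h1 h2 => ihL w.length h2 w h1 le_rfl
  by_cases hw : w = []
  · subst hw; exact P_nil
  obtain ⟨l, rfl⟩ := K_cons hK hw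
  obtain ⟨l', c, hs⟩ := K_scan hK
  obtain ⟨g, v, rfl, -, s3, s4⟩ := scan_some _ _ _ _ _ le_rfl le_rfl hs
  have hpos := scan_none_pos g 1 1 le_rfl le_rfl s3
  simp only [sub_self] at hpos
  rcases s4 with ⟨rfl, h⟩ | ⟨rfl, h⟩
  · exact caseB IH g v hpos.2.2 (by omega) hK hL
  · apply P_of_neg
    have hK' := K_neg hK
    simp only [List.map_cons, List.map_append, negL] at hK' ⊢
    exact caseB IH _ _ (adm_neg _ _ _ hpos.2.2) (by rw [dx_neg]; omega) hK' (by simpa using hL)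

end KP

/-- Dual evacuation of a Kreweras word is obtained from its evacuation by swapping
all `B`'s and `C`'s. -/
theorem evacStar_eq_evac_swap (n : ℕ) (w : List KLetter) (hw : IsKrewerasWord n w) :
    evacStar n w = (evac n w).map negL := by
  exact KP.evac_from_prm n (fun w h => KP.P_main w.length w h le_rfl) w hw
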